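/- Let $\sigma : \mathbb{R}^d \to (0,\infty]$ satisfy $\sigma \ge 2h > 0$, and let $\delta = h/10$. Then there is a constant $C = C(d,h)$ such that $\|f\|_{\widetilde H^{1/2}_{\sigma+\delta}} \le C\|f\|_{\widetilde H^{1/2}_{\sigma}}$ for all $f \in \widetilde H^{1/2}_{\sigma}(\mathbb{R}^d)$. The proof splits the increment region $\sigma(x) \le |k| \le \sigma(x)+\delta$, writes $f(x+k)-f(x) = (f(x+k)-f(x+\theta(x)k+u)) + (f(x+\theta(x)k+u)-f(x))$ with $\theta(x) = 1 - h/(2\sigma(x))$, and averages over $|u| \le h/4$. -/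

import Mathlib

open MeasureTheory
open scoped ENNReal

noncomputable section

/-- Squared screened fractional Sobolev seminorm
`‖f‖²_{H̃^{1/2}_σ} = ∫_{ℝ^d} ∫_{B(0,σ(x))} |f(x+k)-f(x)|²/|k|^{d+1} dk dx`. -/
def screenedSq (d : ℕ) (σ : EuclideanSpace ℝ (Fin d) → ℝ≥0∞)
    (f : EuclideanSpace ℝ (Fin d) → ℝ) : ℝ≥0∞ :=
  ∫⁻ x, ∫⁻ k in {k : EuclideanSpace ℝ (Fin d) | (‖k‖₊ : ℝ≥0∞) < σ x},
    ENNReal.ofReal ((f (x + k) - f x) ^ 2 / ‖k‖ ^ (d + 1))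

local notation "EE" d => EuclideanSpace ℝ (Fin d)

theorem aux_scale (d : ℕ) (θ : ℝ) (hθ : 1 / 2 ≤ θ) (u : EE d) (φ : (EE d) → ℝ≥0∞)
    (hφ : Measurable φ) :
    ∫⁻ k, φ (θ • k + u) ≤ ENNReal.ofReal (2 ^ d) * ∫⁻ z, φ z := by
  have h0 : θ ≠ 0 := by linarith
  have h1 : ∫⁻ k, φ (θ • k + u) = ∫⁻ z, φ (z + u) ∂(Measure.map (fun k : EE d => θ • k) volume) := by
    rw [lintegral_map (by fun_prop) (by fun_prop)]
  rw [h1, Measure.map_addHaar_smul volume h0, lintegral_smul_measure,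
    lintegral_add_right_eq_self φ u, smul_eq_mul]
  gcongr
  rw [finrank_euclideanSpace_fin, abs_of_nonneg (by positivity), ← inv_pow]
  gcongr
  rw [inv_le_comm₀ (by linarith) (by norm_num)]
  linarith

def auxW (d : ℕ) (k : EE d) : ℝ≥0∞ := ENNReal.ofReal ((‖k‖ ^ (d + 1))⁻¹)

def auxD (d : ℕ) (f : (EE d) → ℝ) (a b : EE d) : ℝ≥0∞ := ENNReal.ofReal ((f a - f b) ^ 2)

theorem auxW_meas (d : ℕ) : Measurable (auxW d) := by
  unfold auxW; fun_prop

theorem auxD_meas (d : ℕ) (f : (EE d) → ℝ) (hf : Measurable f) {α : Type*} [MeasurableSpace α]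
    (a b : α → EE d) (ha : Measurable a) (hb : Measurable b) :
    Measurable (fun t => auxD d f (a t) (b t)) := by
  unfold auxD; fun_prop

theorem aux_q (d : ℕ) (f : (EE d) → ℝ) (x k : EE d) :
    ENNReal.ofReal ((f (x + k) - f x) ^ 2 / ‖k‖ ^ (d + 1)) = auxD d f (x + k) x * auxW d k := by
  unfold auxD auxW
  rw [← ENNReal.ofReal_mul (by positivity), div_eq_mul_inv]

theorem auxD_le (d : ℕ) (f : (EE d) → ℝ) (a b c : EE d) :
    auxD d f a c ≤ 2 * auxD d f a b + 2 * auxD d f b c := by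
  unfold auxD
  rw [show (2 : ℝ≥0∞) = ENNReal.ofReal 2 by simp, ← ENNReal.ofReal_mul (by norm_num),
    ← ENNReal.ofReal_mul (by norm_num), ← ENNReal.ofReal_add (by positivity) (by positivity)]
  apply ENNReal.ofReal_le_ofReal
  nlinarith [sq_nonneg (f a - f b - (f b - f c))]

theorem auxW_int (d : ℕ) (h : ℝ) (hh : 0 < h) :
    ∫⁻ k in {k : EE d | 2 * h ≤ ‖k‖}, auxW d k < ⊤ := by
  set c : ℝ := 1 / (2 * h) + 1 with hc
  have hc0 : 0 < c := by positivity
  have hs : MeasurableSet {k : EE d | 2 * h ≤ ‖k‖} := measurableSet_le (by fun_prop) (by fun_prop)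
  have h1 : ∫⁻ k in {k : EE d | 2 * h ≤ ‖k‖}, auxW d k ≤
      ∫⁻ k : EE d, ENNReal.ofReal (c ^ (d + 1)) *
        ENNReal.ofReal ((1 + ‖k‖) ^ (-((d + 1 : ℕ) : ℝ))) := by
    refine le_trans (setLIntegral_mono' hs ?_) (setLIntegral_le_lintegral _ _)
    intro k hk
    have hk : 2 * h ≤ ‖k‖ := hk
    have hk0 : 0 < ‖k‖ := by linarith
    unfold auxW
    rw [← ENNReal.ofReal_mul (by positivity)]
    apply ENNReal.ofReal_le_ofReal
    rw [Real.rpow_neg (by positivity), Real.rpow_natCast, ← inv_pow, ← inv_pow, ← mul_pow]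
    gcongr
    rw [← div_eq_mul_inv, inv_le_comm₀ hk0 (by positivity), inv_div, div_le_iff₀ hc0, hc]
    have : 1 ≤ ‖k‖ * (1 / (2 * h)) := by
      rw [mul_one_div, le_div_iff₀ (by positivity)]; linarith
    nlinarith
  refine h1.trans_lt ?_
  rw [lintegral_const_mul' _ _ ENNReal.ofReal_ne_top]
  apply ENNReal.mul_lt_top ENNReal.ofReal_lt_top
  apply finite_integral_one_add_norm
  rw [finrank_euclideanSpace_fin]
  push_cast; linarith

def auxF (d : ℕ) (h : ℝ) (f : (EE d) → ℝ) (y : EE d) : ℝ≥0∞ :=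
  ∫⁻ w in Metric.ball (0 : EE d) h, auxD d f (y + w) y

def auxH (d : ℕ) (h : ℝ) (f : (EE d) → ℝ) (x : EE d) : ℝ≥0∞ :=
  ∫⁻ k in {k : EE d | 2 * h ≤ ‖k‖}, auxF d h f (x + k) * auxW d k

theorem auxF_meas (d : ℕ) (h : ℝ) (f : (EE d) → ℝ) (hf : Measurable f) :
    Measurable (auxF d h f) := by
  unfold auxF
  apply Measurable.lintegral_prod_right' (f := fun p : (EE d) × (EE d) => auxD d f (p.1 + p.2) p.1)
  exact auxD_meas d f hf _ _ (by fun_prop) (by fun_prop)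

theorem auxH_meas (d : ℕ) (h : ℝ) (f : (EE d) → ℝ) (hf : Measurable f) :
    Measurable (auxH d h f) := by
  unfold auxH
  have := auxF_meas d h f hf
  have := auxW_meas d
  apply Measurable.lintegral_prod_right'
    (f := fun p : (EE d) × (EE d) => auxF d h f (p.1 + p.2) * auxW d p.2)
  fun_prop

theorem auxH_int (d : ℕ) (h : ℝ) (f : (EE d) → ℝ) (hf : Measurable f) :
    ∫⁻ x, auxH d h f x =
      (∫⁻ k in {k : EE d | 2 * h ≤ ‖k‖}, auxW d k) * ∫⁻ y, auxF d h f y := by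
  unfold auxH
  have h1 := auxF_meas d h f hf
  have h2 := auxW_meas d
  rw [lintegral_lintegral_swap (by apply Measurable.aemeasurable; fun_prop)]
  rw [← lintegral_mul_const _ h2]
  congr 1
  ext k
  rw [lintegral_mul_const _ (by fun_prop), lintegral_add_right_eq_self (auxF d h f) k, mul_comm]

theorem auxF_le (d : ℕ) (h : ℝ) (hh : 0 < h) (f : (EE d) → ℝ) (y : EE d) (s : ℝ≥0∞)
    (hs : ENNReal.ofReal (2 * h) ≤ s) :
    auxF d h f y ≤ ENNReal.ofReal (h ^ (d + 1)) *
      ∫⁻ k in {k : EE d | (‖k‖₊ : ℝ≥0∞) < s}, auxD d f (y + k) y * auxW d k := by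
  rw [← lintegral_const_mul' _ _ ENNReal.ofReal_ne_top]
  unfold auxF
  refine le_trans (setLIntegral_mono' (g := fun k => ENNReal.ofReal (h ^ (d + 1)) *
    (auxD d f (y + k) y * auxW d k)) Metric.isOpen_ball.measurableSet ?_)
    (lintegral_mono_set ?_)
  · intro w hw
    rw [mem_ball_zero_iff] at hw
    by_cases h0 : w = 0
    · simp [h0, auxD]
    have h0 : 0 < ‖w‖ := norm_pos_iff.2 h0
    unfold auxD auxW
    rw [← ENNReal.ofReal_mul (by positivity), ← ENNReal.ofReal_mul (by positivity)]
    apply ENNReal.ofReal_le_ofReal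
    have : 1 ≤ h ^ (d + 1) * (‖w‖ ^ (d + 1))⁻¹ := by
      rw [← div_eq_mul_inv, one_le_div (by positivity)]
      gcongr
    nlinarith [sq_nonneg (f (y + w) - f y)]
  · intro w hw
    rw [mem_ball_zero_iff] at hw
    refine lt_of_lt_of_le ?_ hs
    rw [← enorm_eq_nnnorm, ← ofReal_norm]
    exact (ENNReal.ofReal_lt_ofReal_iff (by linarith)).2 (by linarith)

theorem aux_one (d : ℕ) (h : ℝ) (f : (EE d) → ℝ) (y c : EE d)
    (hc : ‖c‖ < 3 / 4 * h) :
    ∫⁻ u in Metric.ball (0 : EE d) (h / 4), auxD d f (y + (u - c)) y ≤ auxF d h f y := by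
  unfold auxF
  rw [← lintegral_indicator Metric.isOpen_ball.measurableSet,
    ← lintegral_indicator Metric.isOpen_ball.measurableSet,
    ← lintegral_sub_right_eq_self ((Metric.ball (0 : EE d) h).indicator _) c]
  apply lintegral_mono
  intro u
  by_cases hu : u ∈ Metric.ball (0 : EE d) (h / 4)
  · have hu' : u - c ∈ Metric.ball (0 : EE d) h := by
      rw [mem_ball_zero_iff] at hu ⊢
      have := norm_sub_le u c
      linarith
    simp [Set.indicator_of_mem hu, Set.indicator_of_mem hu']
  · simp [Set.indicator_of_notMem hu]

theorem aux_two (d : ℕ) (h : ℝ) (hh : 0 < h) (f : (EE d) → ℝ) (hf : Measurable f) (x u : EE d)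
    (s : ℝ) (hs : 2 * h ≤ s) (hu : ‖u‖ < h / 4) :
    ∫⁻ k in {k : EE d | s ≤ ‖k‖ ∧ ‖k‖ < s + h / 10},
      auxD d f (x + ((1 - h / (2 * s)) • k + u)) x * auxW d k ≤
    ENNReal.ofReal (2 ^ d) * ∫⁻ z in {z : EE d | ‖z‖ < s}, auxD d f (x + z) x * auxW d z := by
  have hs0 : 0 < s := by linarith
  have hW := auxW_meas d
  have hD := auxD_meas d f hf (fun z : EE d => x + z) (fun _ => x) (by fun_prop) (by fun_prop)
  have hr : h / (2 * s) ≤ 1 / 4 := by rw [div_le_iff₀ (by positivity)]; linarith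
  have hr0 : 0 < h / (2 * s) := by positivity
  have hrs : h / (2 * s) * s = h / 2 := by field_simp
  have hm1 : MeasurableSet {k : EE d | s ≤ ‖k‖ ∧ ‖k‖ < s + h / 10} :=
    MeasurableSet.inter (s₁ := {k : EE d | s ≤ ‖k‖}) (s₂ := {k : EE d | ‖k‖ < s + h / 10})
      (measurableSet_le (by fun_prop) (by fun_prop))
      (measurableSet_lt (by fun_prop) (by fun_prop))
  have hm2 : MeasurableSet {z : EE d | ‖z‖ < s} := measurableSet_lt (by fun_prop) (by fun_prop)
  rw [← lintegral_indicator hm1, ← lintegral_indicator hm2]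
  refine le_trans (lintegral_mono ?_) (aux_scale d (1 - h / (2 * s)) (by linarith) u _
    ((hD.mul hW).indicator hm2))
  intro k
  by_cases hk : k ∈ {k : EE d | s ≤ ‖k‖ ∧ ‖k‖ < s + h / 10}
  · obtain ⟨hk1, hk2⟩ := id hk
    set r := h / (2 * s) with hrdef
    have hz : ‖(1 - r) • k + u‖ < s := by
      have h1 := norm_add_le ((1 - r) • k) u
      rw [norm_smul, Real.norm_of_nonneg (by linarith)] at h1
      nlinarith
    have hz' : (1 - r) • k + u ∈ {z : EE d | ‖z‖ < s} := hz
    simp only [Set.indicator_of_mem hk, Set.indicator_of_mem hz', Pi.mul_apply]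
    by_cases h0 : (1 - r) • k + u = 0
    · simp [h0, auxD]
    have h0 := norm_pos_iff.2 h0
    gcongr
    unfold auxW
    gcongr
    linarith
  · simp [Set.indicator_of_notMem hk]

theorem aux_shell (d : ℕ) (h : ℝ) (hh : 0 < h) (f : (EE d) → ℝ) (hf : Measurable f) (x : EE d)
    (s : ℝ) (hs : 2 * h ≤ s) :
    volume (Metric.ball (0 : EE d) (h / 4)) *
      ∫⁻ k in {k : EE d | s ≤ ‖k‖ ∧ ‖k‖ < s + h / 10}, auxD d f (x + k) x * auxW d k ≤
    2 * auxH d h f x + 2 * (volume (Metric.ball (0 : EE d) (h / 4)) * (ENNReal.ofReal (2 ^ d) *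
      ∫⁻ z in {z : EE d | ‖z‖ < s}, auxD d f (x + z) x * auxW d z)) := by
  have hs0 : 0 < s := by linarith
  have hW := auxW_meas d
  have hF := auxF_meas d h f hf
  have hm1 : MeasurableSet {k : EE d | s ≤ ‖k‖ ∧ ‖k‖ < s + h / 10} :=
    MeasurableSet.inter (s₁ := {k : EE d | s ≤ ‖k‖}) (s₂ := {k : EE d | ‖k‖ < s + h / 10})
      (measurableSet_le (by fun_prop) (by fun_prop))
      (measurableSet_lt (by fun_prop) (by fun_prop))
  set S := {k : EE d | s ≤ ‖k‖ ∧ ‖k‖ < s + h / 10} with hS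
  set B := Metric.ball (0 : EE d) (h / 4) with hB
  have hBt : volume B ≠ ⊤ := measure_ball_lt_top.ne
  set r := h / (2 * s) with hrdef
  have hr0 : 0 < r := by positivity
  have hrs : r * s = h / 2 := by rw [hrdef]; field_simp
  have hr : r ≤ 1 / 4 := by rw [hrdef, div_le_iff₀ (by positivity)]; linarith
  have hP2 : Measurable (fun p : (EE d) × (EE d) =>
      auxD d f (x + ((1 - r) • p.1 + p.2)) x * auxW d p.1) :=
    (auxD_meas d f hf _ _ (by fun_prop) (by fun_prop)).mul (by fun_prop)
  have hP2' : Measurable (fun k : EE d =>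
      ∫⁻ u in B, auxD d f (x + ((1 - r) • k + u)) x * auxW d k) := hP2.lintegral_prod_right'
  rw [← lintegral_const_mul' _ _ hBt]
  have key : ∀ k ∈ S, volume B * (auxD d f (x + k) x * auxW d k) ≤
      2 * (auxF d h f (x + k) * auxW d k) +
      2 * ∫⁻ u in B, auxD d f (x + ((1 - r) • k + u)) x * auxW d k := by
    intro k hk
    obtain ⟨hk1, hk2⟩ := id hk
    have hWk : auxW d k ≠ ⊤ := ENNReal.ofReal_ne_top
    calc volume B * (auxD d f (x + k) x * auxW d k)
        = ∫⁻ u in B, auxD d f (x + k) x * auxW d k := by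
          rw [setLIntegral_const, mul_comm]
      _ ≤ ∫⁻ u in B, (2 * (auxD d f (x + k + (u - r • k)) (x + k) * auxW d k) +
            2 * (auxD d f (x + ((1 - r) • k + u)) x * auxW d k)) := by
          apply lintegral_mono
          intro u
          have e : x + k + (u - r • k) = x + ((1 - r) • k + u) := by
            rw [sub_smul, one_smul]; abel
          have := auxD_le d f (x + k) (x + ((1 - r) • k + u)) x
          have hsym : auxD d f (x + k) (x + ((1 - r) • k + u)) =
            auxD d f (x + k + (u - r • k)) (x + k) := by
            rw [e]; unfold auxD; congr 1; ring
          rw [hsym] at this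
          calc _ ≤ _ := mul_le_mul_left this (auxW d k)
            _ = _ := by ring
      _ = 2 * ((∫⁻ u in B, auxD d f (x + k + (u - r • k)) (x + k)) * auxW d k) +
            2 * ∫⁻ u in B, auxD d f (x + ((1 - r) • k + u)) x * auxW d k := by
          have hk3 : Measurable (fun u : EE d =>
              2 * (auxD d f (x + ((1 - r) • k + u)) x * auxW d k)) :=
            (hP2.comp (measurable_prodMk_left (x := k))).const_mul 2
          rw [lintegral_add_right _ hk3,
            lintegral_const_mul' _ _ (by simp), lintegral_const_mul' _ _ (by simp),
            lintegral_mul_const' _ _ hWk]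
      _ ≤ _ := by
          gcongr
          apply aux_one
          rw [norm_smul, Real.norm_of_nonneg hr0.le]
          nlinarith
  refine (setLIntegral_mono' hm1 key).trans ?_
  rw [lintegral_add_right _ (hP2'.const_mul 2), lintegral_const_mul' _ _ (by simp),
    lintegral_const_mul' _ _ (by simp)]
  gcongr 2 * ?_ + 2 * ?_
  · unfold auxH
    apply lintegral_mono_set
    intro k hk
    exact hs.trans hk.1
  · rw [lintegral_lintegral_swap hP2.aemeasurable]
    refine (setLIntegral_mono' Metric.isOpen_ball.measurableSet (fun u hu =>
      aux_two d h hh f hf x u s hs (by simpa [hB] using hu))).trans ?_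
    rw [setLIntegral_const, mul_comm]

theorem aux_pt (d : ℕ) (h : ℝ) (hh : 0 < h) (f : (EE d) → ℝ) (hf : Measurable f) (x : EE d)
    (s : ℝ≥0∞) (hs : ENNReal.ofReal (2 * h) ≤ s) :
    volume (Metric.ball (0 : EE d) (h / 4)) *
      ∫⁻ k in {k : EE d | (‖k‖₊ : ℝ≥0∞) < s + ENNReal.ofReal (h / 10)},
        auxD d f (x + k) x * auxW d k ≤
    (volume (Metric.ball (0 : EE d) (h / 4)) * (1 + 2 * ENNReal.ofReal (2 ^ d))) *
      (∫⁻ k in {k : EE d | (‖k‖₊ : ℝ≥0∞) < s}, auxD d f (x + k) x * auxW d k)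
      + 2 * auxH d h f x := by
  set V := volume (Metric.ball (0 : EE d) (h / 4))
  by_cases ht : s = ⊤
  · subst ht
    refine le_trans ?_ le_self_add
    simp only [top_add]
    gcongr
    calc V = V * 1 := (mul_one _).symm
      _ ≤ _ := by gcongr; exact le_self_add
  obtain ⟨t, ht0, rfl⟩ : ∃ t : ℝ, 0 ≤ t ∧ s = ENNReal.ofReal t :=
    ⟨s.toReal, ENNReal.toReal_nonneg, (ENNReal.ofReal_toReal ht).symm⟩
  have hst : 2 * h ≤ t := (ENNReal.ofReal_le_ofReal_iff ht0).1 hs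
  have hset : ∀ a : ℝ, 0 < a → {k : EE d | (‖k‖₊ : ℝ≥0∞) < ENNReal.ofReal a} = {k | ‖k‖ < a} := by
    intro a ha
    ext k
    simp only [Set.mem_ofPred_eq]
    rw [← enorm_eq_nnnorm, ← ofReal_norm, ENNReal.ofReal_lt_ofReal_iff ha]
  rw [← ENNReal.ofReal_add ht0 (by positivity), hset _ (by linarith), hset _ (by linarith)]
  have hsub : {k : EE d | ‖k‖ < t + h / 10} ⊆
      {k | ‖k‖ < t} ∪ {k | t ≤ ‖k‖ ∧ ‖k‖ < t + h / 10} := by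
    intro k hk
    rcases lt_or_ge ‖k‖ t with h1 | h1
    · exact Or.inl h1
    · exact Or.inr ⟨h1, hk⟩
  have h1 := (lintegral_mono_set (μ := volume) (f := fun k => auxD d f (x + k) x * auxW d k)
    hsub).trans (lintegral_union_le _ _ _)
  have h2 := aux_shell d h hh f hf x t hst
  calc _ ≤ _ := mul_le_mul_right h1 V
    _ = _ := mul_add _ _ _
    _ ≤ _ := add_le_add_right h2 _
    _ = _ := by ring

/-- one-step enlargement of the screening function.  If
`σ : ℝ^d → (0,∞]` satisfies `σ ≥ 2h > 0` and `δ = h/10`, then there is a constant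
`C = C(d,h)` such that `‖f‖_{H̃^{1/2}_{σ+δ}} ≤ C ‖f‖_{H̃^{1/2}_σ}` for all
`f ∈ H̃^{1/2}_σ(ℝ^d)`. -/
theorem stmt_2 (d : ℕ) (h : ℝ) (hh : 0 < h) :
    ∃ C : ℝ, 0 < C ∧
      ∀ (σ : EuclideanSpace ℝ (Fin d) → ℝ≥0∞),
        (∀ x, ENNReal.ofReal (2 * h) ≤ σ x) →
        ∀ (f : EuclideanSpace ℝ (Fin d) → ℝ), Measurable f →
          screenedSq d σ f < ⊤ →
          screenedSq d (fun x => σ x + ENNReal.ofReal (h / 10)) f ≤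
            ENNReal.ofReal (C ^ 2) * screenedSq d σ f := by
  set V := volume (Metric.ball (0 : EE d) (h / 4)) with hV
  have hVt : V ≠ ⊤ := measure_ball_lt_top.ne
  have hV0 : V ≠ 0 := (Metric.measure_ball_pos volume _ (by positivity)).ne'
  set K := ∫⁻ k in {k : EE d | 2 * h ≤ ‖k‖}, auxW d k with hK
  have hKt : K ≠ ⊤ := (auxW_int d h hh).ne
  set A := V * (1 + 2 * ENNReal.ofReal (2 ^ d)) with hA
  have hAt : A ≠ ⊤ := ENNReal.mul_ne_top hVt
    (ENNReal.add_ne_top.2 ⟨by simp, ENNReal.mul_ne_top (by simp) ENNReal.ofReal_ne_top⟩)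
  set c := V⁻¹ * (A + 2 * (K * ENNReal.ofReal (h ^ (d + 1)))) with hc
  have hct : c ≠ ⊤ := ENNReal.mul_ne_top (ENNReal.inv_ne_top.2 hV0)
    (ENNReal.add_ne_top.2 ⟨hAt, ENNReal.mul_ne_top (by simp)
      (ENNReal.mul_ne_top hKt ENNReal.ofReal_ne_top)⟩)
  refine ⟨c.toReal + 1, by positivity, ?_⟩
  intro σ hσ f hf _
  have hcC : c ≤ ENNReal.ofReal ((c.toReal + 1) ^ 2) := by
    rw [← ENNReal.ofReal_toReal hct, ENNReal.toReal_ofReal ENNReal.toReal_nonneg]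
    apply ENNReal.ofReal_le_ofReal
    nlinarith [ENNReal.toReal_nonneg (a := c)]
  refine le_trans ?_ (mul_le_mul_left hcC _)
  unfold screenedSq
  simp only [aux_q]
  set G := ∫⁻ x, ∫⁻ k in {k : EE d | (‖k‖₊ : ℝ≥0∞) < σ x}, auxD d f (x + k) x * auxW d k with hG
  have hFG : ∫⁻ y, auxF d h f y ≤ ENNReal.ofReal (h ^ (d + 1)) * G := by
    rw [hG, ← lintegral_const_mul' _ _ ENNReal.ofReal_ne_top]
    exact lintegral_mono fun y => auxF_le d h hh f y (σ y) (hσ y)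
  have h1 := lintegral_mono (μ := volume) (fun x => aux_pt d h hh f hf x (σ x) (hσ x))
  rw [lintegral_const_mul' _ _ hVt, lintegral_add_right _ ((auxH_meas d h f hf).const_mul 2),
    lintegral_const_mul' _ _ hAt, lintegral_const_mul' _ _ (by simp), auxH_int d h f hf] at h1
  rw [hc, mul_assoc, ← ENNReal.div_eq_inv_mul, ENNReal.le_div_iff_mul_le (Or.inl hV0) (Or.inl hVt),
    mul_comm _ V]
  refine h1.trans ?_
  calc _ ≤ A * G + 2 * (K * (ENNReal.ofReal (h ^ (d + 1)) * G)) := by gcongr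
    _ = _ := by ring

end
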